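/- For every integer L ≥ 0, the generating function of Type-1 partitions with all subscripts at most L satisfies \sum_{π} A^{ν_a(π)} B^{ν_b(π)} (AB)^{ν_{ab}(π)} q^{σ(π)} = \sum_{i, j ≥ 0, i+j ≤ L} A^i B^j q^{T_i + T_j} \binom{L}{i, j, L-i-j}_q, where the left sum is over all Type-1 partitions π whose largest part is at most the symbol b_L (equivalently, every subscript is ≤ L), σ(π) is the sum of the subscripts of π, and ν_a(π), ν_b(π), ν_{ab}(π) are the numbers of parts of π of colors a, b, ab respectively; this is an identity of polynomials in A, B, q. -/

import Mathlib

open Finset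

/-- The three colors `a`, `b`, `ab` of the Alladi–Gordon weighted words. -/
inductive PColor | a | b | ab
deriving DecidableEq

/-- A colored part: a color together with a subscript. -/
abbrev CPart := PColor × ℕ

/-- A Type-1 partition: a list of valid colored symbols (`a_m, b_m` for `m ≥ 1`,
`ab_m` for `m ≥ 2`) whose subscripts decrease with gap `≥ 1` between consecutive
symbols, the gap being `≥ 2` when the larger symbol has color `ab`, or the larger
symbol has color `a` and the smaller one has color `b`. -/
def IsType1 (π : List CPart) : Prop :=
  (∀ p ∈ π, 1 ≤ p.2 ∧ (p.1 = PColor.ab → 2 ≤ p.2)) ∧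
  π.Chain' (fun x y => y.2 + 1 ≤ x.2 ∧
    ((x.1 = PColor.ab ∨ (x.1 = PColor.a ∧ y.1 = PColor.b)) → y.2 + 2 ≤ x.2))

/-- Number of parts of a given color. -/
def colorCount (c : PColor) (π : List CPart) : ℕ := (π.filter (fun p => p.1 = c)).length

/-- The sum of the subscripts. -/
def wt (π : List CPart) : ℕ := (π.map Prod.snd).sum

/-- The field `ℚ(A, B, q)` of rational functions in three variables. -/
abbrev K3 := FractionRing (MvPolynomial (Fin 3) ℚ)

/-- The variable `A`. -/
noncomputable def Av : K3 := algebraMap (MvPolynomial (Fin 3) ℚ) K3 (MvPolynomial.X 0)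
/-- The variable `B`. -/
noncomputable def Bv : K3 := algebraMap (MvPolynomial (Fin 3) ℚ) K3 (MvPolynomial.X 1)
/-- The variable `q`. -/
noncomputable def qv : K3 := algebraMap (MvPolynomial (Fin 3) ℚ) K3 (MvPolynomial.X 2)

/-- `(x; x)_n = ∏_{t=0}^{n-1} (1 - x^{t+1})`. -/
noncomputable def pochK (x : K3) (n : ℕ) : K3 := ∏ t ∈ Finset.range n, (1 - x ^ (t + 1))

/-- The q-multinomial coefficient of order 3 with base `x`, set to `0` if any lower
argument is negative. -/
noncomputable def trinK (x : K3) (u v w : ℤ) : K3 :=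
  if 0 ≤ u ∧ 0 ≤ v ∧ 0 ≤ w then
    pochK x (u + v + w).toNat / (pochK x u.toNat * pochK x v.toNat * pochK x w.toNat) else 0

/-- `T n = n(n+1)/2`, the n-th triangular number. -/
def tri (n : ℕ) : ℕ := n * (n + 1) / 2

lemma qv_pow_ne (n : ℕ) : (1 : K3) - qv ^ (n + 1) ≠ 0 := by
  intro h
  have h1 : algebraMap (MvPolynomial (Fin 3) ℚ) K3 (1 - MvPolynomial.X 2 ^ (n + 1)) =
      algebraMap (MvPolynomial (Fin 3) ℚ) K3 0 := by
    simpa [qv] using h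
  have h2 := IsFractionRing.injective (MvPolynomial (Fin 3) ℚ) K3 h1
  have h3 := congrArg (MvPolynomial.eval (fun _ => (2 : ℚ))) h2
  simp only [map_sub, map_one, map_pow, MvPolynomial.eval_X, map_zero] at h3
  have h4 : (1 : ℚ) < 2 ^ (n + 1) := one_lt_pow₀ (by norm_num) (by omega)
  linarith

lemma pochK_succ (n : ℕ) : pochK qv (n + 1) = pochK qv n * (1 - qv ^ (n + 1)) := by
  simp [pochK, Finset.prod_range_succ]

lemma pochK_zero : pochK qv 0 = 1 := by simp [pochK]

lemma pochK_ne (n : ℕ) : pochK qv n ≠ 0 := by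
  rw [pochK, Finset.prod_ne_zero_iff]
  intro t _
  exact qv_pow_ne t

lemma tri_succ (n : ℕ) : tri (n + 1) = tri n + (n + 1) := by
  unfold tri
  have : (n + 1) * (n + 1 + 1) = n * (n + 1) + (n + 1) * 2 := by ring
  rw [this, Nat.add_mul_div_right _ _ (by norm_num)]

open PowerSeries in
/-- The series `∑ C^i q^{T_i} z^i / (q)_i`. -/
noncomputable def serE (C : K3) : PowerSeries K3 :=
  PowerSeries.mk fun i => C ^ i * qv ^ tri i / pochK qv i

/-- The series `∑ z^i / (q)_i`. -/
noncomputable def sere : PowerSeries K3 := PowerSeries.mk fun i => 1 / pochK qv i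

lemma sere_eq : PowerSeries.rescale qv sere = (1 - PowerSeries.X) * sere := by
  ext n
  rw [sub_mul, one_mul, map_sub, PowerSeries.coeff_rescale]
  cases n with
  | zero => simp [sere]
  | succ n =>
    rw [PowerSeries.coeff_succ_X_mul]
    simp only [sere, PowerSeries.coeff_mk, pochK_succ]
    have := pochK_ne n
    have := qv_pow_ne n
    field_simp
    ring

lemma serE_eq (D : K3) : serE D =
    (1 + PowerSeries.C (D * qv) * PowerSeries.X) * PowerSeries.rescale qv (serE D) := by
  ext n
  rw [add_mul, one_mul, map_add, PowerSeries.coeff_rescale, mul_assoc, PowerSeries.coeff_C_mul]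
  cases n with
  | zero => simp
  | succ n =>
    rw [PowerSeries.coeff_succ_X_mul, PowerSeries.coeff_rescale]
    simp only [serE, PowerSeries.coeff_mk, pochK_succ, tri_succ]
    have := pochK_ne n
    have := qv_pow_ne n
    field_simp
    ring

/-- The product series. -/
noncomputable def serF : PowerSeries K3 := serE Av * (serE Bv * sere)

lemma serF_eq : serF - PowerSeries.rescale qv serF = PowerSeries.X * serF +
    PowerSeries.C ((Av + Bv) * qv) * (PowerSeries.X * PowerSeries.rescale qv serF) +
    PowerSeries.C (Av * Bv * qv ^ 2) *
      (PowerSeries.X * (PowerSeries.X * PowerSeries.rescale qv serF)) := by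
  have hA := serE_eq Av
  have hB := serE_eq Bv
  have he := sere_eq
  have h : (1 - PowerSeries.X) * serF = (1 + PowerSeries.C (Av * qv) * PowerSeries.X) *
      (1 + PowerSeries.C (Bv * qv) * PowerSeries.X) * PowerSeries.rescale qv serF := by
    have h1 : (1 - PowerSeries.X) * serF = serE Av * (serE Bv * ((1 - PowerSeries.X) * sere)) := by
      rw [serF]; ring
    rw [h1, ← he]
    conv_lhs => rw [hA, hB]
    have h2 : PowerSeries.rescale qv serF = PowerSeries.rescale qv (serE Av) *
        (PowerSeries.rescale qv (serE Bv) * PowerSeries.rescale qv sere) := by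
      rw [serF, map_mul, map_mul]
    rw [h2]
    ring
  simp only [map_mul, map_add, map_pow] at h ⊢
  linear_combination h

/-- The right-hand side. -/
noncomputable def Rr (L : ℕ) : K3 := pochK qv L * PowerSeries.coeff L serF

lemma coeff_eq_Rr (L : ℕ) : PowerSeries.coeff L serF = Rr L / pochK qv L := by
  rw [Rr, mul_div_cancel_left₀ _ (pochK_ne L)]

lemma Rr_zero : Rr 0 = 1 := by
  simp [Rr, serF, serE, sere, pochK_zero, tri]

lemma Rr_one : Rr 1 = 1 + (Av + Bv) * qv := by
  have h := congrArg (PowerSeries.coeff 1) serF_eq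
  rw [map_sub, map_add, map_add, PowerSeries.coeff_C_mul, PowerSeries.coeff_C_mul,
    PowerSeries.coeff_succ_X_mul, PowerSeries.coeff_succ_X_mul, PowerSeries.coeff_succ_X_mul,
    PowerSeries.coeff_rescale, PowerSeries.coeff_rescale, PowerSeries.coeff_zero_X_mul,
    coeff_eq_Rr, coeff_eq_Rr, Rr_zero, pochK_succ, pochK_zero] at h
  have := qv_pow_ne 0
  field_simp at h
  simp only [zero_add, pow_one] at *
  apply mul_right_cancel₀ this
  linear_combination h

lemma Rr_rec (L : ℕ) : Rr (L + 2) = (1 + (Av + Bv) * qv ^ (L + 2)) * Rr (L + 1) +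
    Av * Bv * qv ^ (L + 2) * (1 - qv ^ (L + 1)) * Rr L := by
  have h := congrArg (PowerSeries.coeff (L + 2)) serF_eq
  rw [map_sub, map_add, map_add, PowerSeries.coeff_C_mul, PowerSeries.coeff_C_mul,
    PowerSeries.coeff_succ_X_mul, PowerSeries.coeff_succ_X_mul, PowerSeries.coeff_succ_X_mul,
    PowerSeries.coeff_succ_X_mul,
    PowerSeries.coeff_rescale, PowerSeries.coeff_rescale, PowerSeries.coeff_rescale,
    coeff_eq_Rr, coeff_eq_Rr, coeff_eq_Rr, pochK_succ (L + 1), pochK_succ L] at h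
  have h0 := pochK_ne L
  have h1 := qv_pow_ne L
  have h2 := qv_pow_ne (L + 1)
  rw [show L + 1 + 1 = L + 2 from rfl] at *
  have h3 : Rr (L + 2) - qv ^ (L + 2) * Rr (L + 2) =
      (1 - qv ^ (L + 2)) * ((1 + (Av + Bv) * qv ^ (L + 2)) * Rr (L + 1) +
        Av * Bv * qv ^ (L + 2) * (1 - qv ^ (L + 1)) * Rr L) := by
    field_simp at h
    linear_combination (1 - qv ^ (L + 2)) * h
  apply mul_left_cancel₀ h2
  linear_combination h3

lemma Rr_eq (L : ℕ) : Rr L = ∑ i ∈ Finset.range (L + 1), ∑ j ∈ Finset.range (L + 1 - i),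
      Av ^ i * Bv ^ j * qv ^ (tri i + tri j) * trinK qv (i : ℤ) (j : ℤ) ((L : ℤ) - i - j) := by
  rw [Rr, serF, PowerSeries.coeff_mul, Finset.Nat.sum_antidiagonal_eq_sum_range_succ_mk,
    Finset.mul_sum]
  refine Finset.sum_congr rfl fun i hi => ?_
  have hi' : i ≤ L := by simpa [Nat.lt_succ_iff] using hi
  rw [PowerSeries.coeff_mul, Finset.Nat.sum_antidiagonal_eq_sum_range_succ_mk,
    Finset.mul_sum, Finset.mul_sum, show L + 1 - i = (L - i).succ by omega]
  refine Finset.sum_congr rfl fun j hj => ?_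
  have hj' : j ≤ L - i := by simpa [Nat.lt_succ_iff] using hj
  have e1 : (L : ℤ) - i - j = ((L - i - j : ℕ) : ℤ) := by omega
  have e2 : (i : ℤ) + j + ((L - i - j : ℕ) : ℤ) = (L : ℤ) := by omega
  rw [trinK, e1, if_pos (by omega), e2]
  simp only [Int.toNat_natCast, serE, sere, PowerSeries.coeff_mk]
  rw [pow_add]
  ring

/-- The gap relation. -/
def gapR (x y : CPart) : Prop := y.2 + 1 ≤ x.2 ∧
    ((x.1 = PColor.ab ∨ (x.1 = PColor.a ∧ y.1 = PColor.b)) → y.2 + 2 ≤ x.2)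

lemma isType1_nil : IsType1 [] := ⟨by simp, List.IsChain.nil⟩

lemma isType1_cons (c : CPart) (π : List CPart) : IsType1 (c :: π) ↔
    (1 ≤ c.2 ∧ (c.1 = PColor.ab → 2 ≤ c.2)) ∧ (∀ y ∈ π.head?, gapR c y) ∧ IsType1 π := by
  unfold IsType1 gapR List.Chain'
  rw [List.forall_mem_cons, List.isChain_cons]
  tauto

lemma bound_iff (m : ℕ) (π : List CPart) (h : IsType1 π) :
    (∀ p ∈ π, p.2 ≤ m) ↔ ∀ p ∈ π.head?, p.2 ≤ m := by
  induction π with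
  | nil => simp
  | cons c π ih =>
    rw [isType1_cons] at h
    rw [List.forall_mem_cons, ih h.2.2]
    simp only [List.head?_cons, Option.mem_some_iff, forall_eq']
    refine ⟨fun h => h.1, fun h' => ⟨h', fun p hp => ?_⟩⟩
    have := (h.2.1 p hp).1
    omega

/-- Type-1 partitions with subscripts at most `m`. -/
def Sset (m : ℕ) : Set (List CPart) := {π | IsType1 π ∧ ∀ p ∈ π, p.2 ≤ m}

/-- Those without a part `b_m`. -/
def Hset (m : ℕ) : Set (List CPart) :=
  {π | π ∈ Sset m ∧ ∀ p ∈ π.head?, p ≠ (PColor.b, m)}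

lemma mem_S (m : ℕ) (π : List CPart) :
    π ∈ Sset m ↔ IsType1 π ∧ ∀ p ∈ π.head?, p.2 ≤ m := by
  unfold Sset
  constructor
  · rintro ⟨h, h'⟩
    exact ⟨h, (bound_iff m π h).1 h'⟩
  · rintro ⟨h, h'⟩
    exact ⟨h, (bound_iff m π h).2 h'⟩

lemma S_zero : Sset 0 = {[]} := by
  ext π
  rw [mem_S]
  cases π with
  | nil => simp [isType1_nil]
  | cons c π => simp [isType1_cons]; omega

lemma H_zero : Hset 0 = {[]} := by
  ext π
  simp only [Hset, S_zero, Set.mem_ofPred_eq, Set.mem_singleton_iff]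
  constructor
  · exact fun h => h.1
  · rintro rfl; simp

lemma S_mono {m n : ℕ} (h : m ≤ n) : Sset m ⊆ Sset n :=
  fun _ hπ => ⟨hπ.1, fun p hp => (hπ.2 p hp).trans h⟩

lemma S_succ (m : ℕ) : Sset (m + 1) =
    Hset (m + 1) ∪ (List.cons (PColor.b, m + 1)) '' Sset m := by
  ext π
  simp only [Set.mem_union, Set.mem_image, Hset, Set.mem_ofPred_eq, mem_S]
  cases π with
  | nil => simp
  | cons c π =>
    obtain ⟨c, k⟩ := c
    simp only [isType1_cons, List.head?_cons, Option.mem_some_iff, forall_eq', List.cons.injEq,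
      gapR, Prod.mk.injEq, ne_eq]
    constructor
    · rintro ⟨h1, h2⟩
      by_cases hc : c = PColor.b ∧ k = m + 1
      · right
        refine ⟨π, ⟨h1.2.2, fun p hp => ?_⟩, ⟨hc.1.symm, hc.2.symm⟩, rfl⟩
        have := (h1.2.1 p hp).1
        omega
      · left
        exact ⟨⟨h1, h2⟩, hc⟩
    · rintro (h | ⟨π', ⟨h1, h2⟩, ⟨rfl, rfl⟩, rfl⟩)
      · exact h.1
      · refine ⟨⟨by simp, fun p hp => ⟨by have := h2 p hp; omega, by simp⟩, h1⟩, le_rfl⟩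

lemma H_succ (m : ℕ) : Hset (m + 1) = Sset m ∪
    ((List.cons (PColor.a, m + 1)) '' Hset m ∪
     (List.cons (PColor.ab, m + 1)) '' {π | 1 ≤ m ∧ π ∈ Sset (m - 1)}) := by
  ext π
  simp only [Set.mem_union, Set.mem_image, Hset, Set.mem_ofPred_eq, mem_S]
  cases π with
  | nil => simp [isType1_nil]
  | cons c π =>
    obtain ⟨c, k⟩ := c
    simp only [isType1_cons, List.head?_cons, Option.mem_some_iff, forall_eq', List.cons.injEq,
      gapR, Prod.mk.injEq, ne_eq]
    constructor
    · rintro ⟨⟨h1, h2⟩, h3⟩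
      by_cases hk : k ≤ m
      · left; exact ⟨h1, hk⟩
      · right
        obtain rfl : k = m + 1 := by omega
        cases c with
        | b => simp at h3
        | a =>
          left
          refine ⟨π, ⟨⟨h1.2.2, fun p hp => ?_⟩, fun p hp hpb => ?_⟩, ⟨rfl, rfl⟩, rfl⟩
          · have := (h1.2.1 p hp).1
            omega
          · have := (h1.2.1 p hp).2 (by simp [hpb])
            simp [hpb] at this
        | ab =>
          right
          have := h1.1.2 rfl
          refine ⟨π, ⟨by omega, h1.2.2, fun p hp => ?_⟩, ⟨rfl, rfl⟩, rfl⟩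
          have := (h1.2.1 p hp).2 (by simp)
          omega
    · rintro (h | ⟨π', ⟨⟨h1, h2⟩, h3⟩, ⟨rfl, rfl⟩, rfl⟩ | ⟨π', ⟨h0, h1, h2⟩, ⟨rfl, rfl⟩, rfl⟩)
      · refine ⟨⟨h.1, by omega⟩, by omega⟩
      · refine ⟨⟨⟨by simp, fun p hp => ⟨by have := h2 p hp; omega, fun hh => ?_⟩, h1⟩, le_rfl⟩,
          by simp⟩
        have hb : p.1 = PColor.b := by simpa using hh
        have h4 := h3 p hp
        have h5 := h2 p hp
        have : p.2 ≠ m := fun h => h4 (Prod.ext hb h)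
        omega
      · refine ⟨⟨⟨⟨by simp, fun _ => by omega⟩,
          fun p hp => ?_, h1⟩, le_rfl⟩, by simp⟩
        have h5 := h2 p hp
        omega

lemma H_sub (m : ℕ) : Hset m ⊆ Sset m := fun _ h => h.1

lemma S_finite (m : ℕ) : (Sset m).Finite := by
  induction m using Nat.strong_induction_on with
  | _ m ih =>
    cases m with
    | zero => rw [S_zero]; exact Set.finite_singleton _
    | succ m =>
      rw [S_succ, H_succ]
      have h1 := ih m (by omega)
      have h2 : {π | 1 ≤ m ∧ π ∈ Sset (m - 1)}.Finite :=
        (ih (m - 1) (by omega)).subset fun _ h => h.2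
      exact ((h1.union (((h1.subset (H_sub m)).image _).union (h2.image _))).union (h1.image _))

/-- The weight of a partition. -/
noncomputable def wgt (π : List CPart) : K3 :=
  Av ^ colorCount PColor.a π * Bv ^ colorCount PColor.b π *
        (Av * Bv) ^ colorCount PColor.ab π * qv ^ wt π

lemma wgt_a (m : ℕ) (π : List CPart) : wgt ((PColor.a, m) :: π) = Av * qv ^ m * wgt π := by
  simp [wgt, colorCount, wt, pow_add]; ring
lemma wgt_b (m : ℕ) (π : List CPart) : wgt ((PColor.b, m) :: π) = Bv * qv ^ m * wgt π := by
  simp [wgt, colorCount, wt, pow_add]; ring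
lemma wgt_ab (m : ℕ) (π : List CPart) :
    wgt ((PColor.ab, m) :: π) = Av * Bv * qv ^ m * wgt π := by
  simp [wgt, colorCount, wt, pow_add]; ring
lemma wgt_nil : wgt [] = 1 := by simp [wgt, colorCount, wt]

lemma sum_image (c : CPart) (w : K3) (hw : ∀ π, wgt (c :: π) = w * wgt π)
    (s : Set (List CPart)) (hs : s.Finite) :
    ∑ᶠ π ∈ List.cons c '' s, wgt π = w * ∑ᶠ π ∈ s, wgt π := by
  rw [finsum_mem_image (fun _ _ _ _ h => (List.cons.inj h).2), mul_finsum_mem' _ _ hs]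
  simp only [hw]

/-- Generating function of `Sset`. -/
noncomputable def Gg (m : ℕ) : K3 := ∑ᶠ π ∈ Sset m, wgt π
/-- Generating function of `Hset`. -/
noncomputable def Hh (m : ℕ) : K3 := ∑ᶠ π ∈ Hset m, wgt π

lemma cons_not_mem (c : PColor) (m : ℕ) (π : List CPart) : (c, m + 1) :: π ∉ Sset m := by
  intro h
  have := h.2 (c, m + 1) (by simp)
  simp at this

lemma G_succ (m : ℕ) : Gg (m + 1) = Hh (m + 1) + Bv * qv ^ (m + 1) * Gg m := by
  unfold Gg Hh
  rw [S_succ, finsum_mem_union _ ((S_finite _).subset (H_sub _)) ((S_finite m).image _),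
    sum_image _ _ (wgt_b (m + 1)) _ (S_finite m)]
  rw [Set.disjoint_left]
  rintro _ h ⟨π, _, rfl⟩
  exact h.2 (PColor.b, m + 1) (by simp) rfl

lemma H_succ_sum (m : ℕ) : Hh (m + 1) = Gg m + (Av * qv ^ (m + 1) * Hh m +
    Av * Bv * qv ^ (m + 1) * ∑ᶠ π ∈ {π | 1 ≤ m ∧ π ∈ Sset (m - 1)}, wgt π) := by
  have hf : {π | 1 ≤ m ∧ π ∈ Sset (m - 1)}.Finite :=
        (S_finite (m - 1)).subset fun _ h => h.2
  have hH : (Hset m).Finite := (S_finite _).subset (H_sub _)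
  unfold Gg Hh
  rw [H_succ, finsum_mem_union _ (S_finite m) ((hH.image _).union (hf.image _)),
    finsum_mem_union _ (hH.image _) (hf.image _),
    sum_image _ _ (wgt_a (m + 1)) _ hH, sum_image _ _ (wgt_ab (m + 1)) _ hf]
  · rw [Set.disjoint_left]
    rintro _ ⟨π, _, rfl⟩ ⟨π', _, h⟩
    simp at h
  · rw [Set.disjoint_left]
    rintro _ h (⟨π, _, rfl⟩ | ⟨π, _, rfl⟩)
    · exact cons_not_mem _ _ _ h
    · exact cons_not_mem _ _ _ h

lemma G_zero : Gg 0 = 1 := by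
  rw [Gg, S_zero, finsum_mem_singleton, wgt_nil]

lemma H_zero_sum : Hh 0 = 1 := by
  rw [Hh, H_zero, finsum_mem_singleton, wgt_nil]

lemma G_one : Gg 1 = 1 + (Av + Bv) * qv := by
  have h1 := G_succ 0
  have h2 := H_succ_sum 0
  simp [G_zero, H_zero_sum] at h1 h2
  rw [h1, h2]; ring

lemma G_rec (L : ℕ) : Gg (L + 2) = (1 + (Av + Bv) * qv ^ (L + 2)) * Gg (L + 1) +
    Av * Bv * qv ^ (L + 2) * (1 - qv ^ (L + 1)) * Gg L := by
  have h1 := G_succ (L + 1)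
  have h2 := H_succ_sum (L + 1)
  have h3 := G_succ L
  have h4 : ∑ᶠ π ∈ {π | 1 ≤ L + 1 ∧ π ∈ Sset (L + 1 - 1)}, wgt π = Gg L := by
    simp [Gg]
  rw [h4] at h2
  linear_combination h1 + h2 - Av * qv ^ (L + 2) * h3

lemma G_eq_R (L : ℕ) : Gg L = Rr L := by
  induction L using Nat.strong_induction_on with
  | _ L ih =>
    match L with
    | 0 => rw [G_zero, Rr_zero]
    | 1 => rw [G_one, Rr_one]
    | L + 2 => rw [G_rec, Rr_rec, ih L (by omega), ih (L + 1) (by omega)]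

/-- Identity (5.3)/(5.4): for `L ≥ 0`, the generating function of Type-1 partitions
with all parts at most `b_L` (i.e. all subscripts `≤ L`), counted with weights
`A^{ν_a} B^{ν_b} (AB)^{ν_{ab}} q^{σ}`, equals
`∑_{i,j ≥ 0, i+j ≤ L} A^i B^j q^{T_i + T_j} [L; i, j, L-i-j]_q`. -/
theorem type1_generating_function (L : ℕ) :
    (∑ᶠ π ∈ {π : List CPart | IsType1 π ∧ ∀ p ∈ π, p.2 ≤ L},
      Av ^ colorCount PColor.a π * Bv ^ colorCount PColor.b π *
        (Av * Bv) ^ colorCount PColor.ab π * qv ^ wt π) =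
    ∑ i ∈ Finset.range (L + 1), ∑ j ∈ Finset.range (L + 1 - i),
      Av ^ i * Bv ^ j * qv ^ (tri i + tri j) * trinK qv (i : ℤ) (j : ℤ) ((L : ℤ) - i - j) := by
  rw [← Rr_eq, ← G_eq_R]
  rfl
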